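/- arXiv:1604.03220 — 2 statements merged into one kernel-verified Lean document; each statement's English description precedes it below -/
import Mathlib

section
/- Evaluation of elementary symmetric polynomials at (p,q)-geometric nodes: let n ≥ 1 be a natural number, let 1 ≤ k ≤ n, and let p, q be reals with 0 < q < p. Then φ_{n,k}(p^{n−1}, p^{n−2}q, …, p q^{n−2}, q^{n−1}) = (pq)^{k(k−1)/2} [n choose k]_{p,q}, where the i-th argument is p^{n−i} q^{i−1} for i = 1, …, n. -/
/-- The (p,q)-integer `[n]_{p,q} = Σ_{j=0}^{n-1} p^{n-1-j} q^j`. -/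
noncomputable def pqInt (p q : ℝ) (n : ℕ) : ℝ :=
  ∑ j ∈ Finset.range n, p ^ (n - 1 - j) * q ^ j

/-- The (p,q)-factorial `[n]_{p,q}! = ∏_{j=1}^{n} [j]_{p,q}`. -/
noncomputable def pqFact (p q : ℝ) : ℕ → ℝ
  | 0 => 1
  | n + 1 => pqFact p q n * pqInt p q (n + 1)

/-- The (p,q)-binomial coefficient `[n choose k]_{p,q}`. -/
noncomputable def pqBinom (p q : ℝ) (n k : ℕ) : ℝ :=
  pqFact p q n / (pqFact p q k * pqFact p q (n - k))

/-- The (p,q)-Bernstein basis function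
`B_k^n(t;p,q) = p^{k(k-1)/2 - n(n-1)/2} [n choose k]_{p,q} t^k ∏_{s=0}^{n-k-1} (p^s - q^s t)`. -/
noncomputable def pqBernstein (p q : ℝ) (n k : ℕ) (t : ℝ) : ℝ :=
  p ^ (k * (k - 1) / 2) / p ^ (n * (n - 1) / 2) * pqBinom p q n k * t ^ k *
    ∏ s ∈ Finset.range (n - k), (p ^ s - q ^ s * t)

/-- The `k`-th elementary symmetric polynomial in `n` variables:
`φ_{n,k}(u_1, …, u_n) = Σ_{1 ≤ i_1 < … < i_k ≤ n} u_{i_1} ⋯ u_{i_k}`. -/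
noncomputable def esymmEval (n k : ℕ) (u : Fin n → ℝ) : ℝ :=
  ∑ S ∈ Finset.powersetCard k (Finset.univ : Finset (Fin n)), ∏ i ∈ S, u i


lemma esymmEval_zero_right (n : ℕ) (u : Fin n → ℝ) : esymmEval n 0 u = 1 := by
  simp [esymmEval]

lemma esymmEval_of_lt (n k : ℕ) (h : n < k) (u : Fin n → ℝ) : esymmEval n k u = 0 := by
  unfold esymmEval
  rw [Finset.powersetCard_eq_empty.2 (by simpa using h), Finset.sum_empty]

lemma esymmEval_succ (n k : ℕ) (u : Fin (n + 1) → ℝ) :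
    esymmEval (n + 1) (k + 1) u =
      esymmEval n (k + 1) (fun i => u i.castSucc)
        + u (Fin.last n) * esymmEval n k (fun i => u i.castSucc) := by
  unfold esymmEval
  rw [← Finset.esymm_map_val, ← Finset.esymm_map_val, ← Finset.esymm_map_val,
    Fin.univ_castSuccEmb]
  simp only [Multiset.esymm, Finset.cons_val, Finset.map_val, Multiset.map_cons, Multiset.map_map,
    Multiset.powersetCard_cons, Multiset.map_add, Multiset.sum_add, Function.comp_def,
    Multiset.prod_cons, Multiset.sum_map_mul_left, Fin.coe_castSuccEmb]

lemma esymmEval_smul (n k : ℕ) (c : ℝ) (u : Fin n → ℝ) :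
    esymmEval n k (fun i => c * u i) = c ^ k * esymmEval n k u := by
  unfold esymmEval
  rw [Finset.mul_sum]
  refine Finset.sum_congr rfl fun S hS => ?_
  rw [Finset.prod_mul_distrib, Finset.prod_const, (Finset.mem_powersetCard.1 hS).2]

lemma pqInt_add (p q : ℝ) (a b : ℕ) :
    pqInt p q (a + b) = p ^ a * pqInt p q b + q ^ b * pqInt p q a := by
  unfold pqInt
  rw [add_comm a b, Finset.sum_range_add, Finset.mul_sum, Finset.mul_sum]
  congr 1
  · refine Finset.sum_congr rfl fun j hj => ?_
    have := Finset.mem_range.1 hj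
    rw [show b + a - 1 - j = a + (b - 1 - j) by omega, pow_add]
    ring
  · refine Finset.sum_congr rfl fun j hj => ?_
    rw [show b + a - 1 - (b + j) = a - 1 - j by omega, pow_add]
    ring

lemma pqInt_pos (p q : ℝ) (hp : 0 < p) (hq : 0 < q) (n : ℕ) : 0 < pqInt p q (n + 1) := by
  unfold pqInt
  exact Finset.sum_pos (fun j _ => by positivity) ⟨0, by simp⟩

lemma pqFact_pos (p q : ℝ) (hp : 0 < p) (hq : 0 < q) (n : ℕ) : 0 < pqFact p q n := by
  induction n with
  | zero => simp [pqFact]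
  | succ n ih => exact mul_pos ih (pqInt_pos p q hp hq n)

lemma pq_nodes_aux (p q : ℝ) (hp : 0 < p) (hq : 0 < q) (n : ℕ) : ∀ k, k ≤ n →
    esymmEval n k (fun i => p ^ (n - 1 - (i : ℕ)) * q ^ (i : ℕ)) =
      (p * q) ^ (k * (k - 1) / 2) * pqBinom p q n k := by
  have hF := fun n => (pqFact_pos p q hp hq n).ne'
  induction n with
  | zero =>
    intro k hk
    obtain rfl : k = 0 := by omega
    simp [esymmEval_zero_right, pqBinom, pqFact]
  | succ n ih =>
    intro k hk
    rcases k with _ | k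
    · have := hF (n + 1)
      simp [esymmEval_zero_right, pqBinom, pqFact] at this ⊢
      rw [div_self]
      exact mul_ne_zero this.1 this.2
    have hnode : (fun i : Fin n => p ^ (n + 1 - 1 - (i.castSucc : ℕ)) * q ^ (i.castSucc : ℕ))
        = fun i : Fin n => p * (p ^ (n - 1 - (i : ℕ)) * q ^ (i : ℕ)) := by
      funext i
      have := i.2
      rw [Fin.val_castSucc, show n + 1 - 1 - (i : ℕ) = (n - 1 - i) + 1 by omega, pow_succ]
      ring
    have htri : (k + 1) * (k + 1 - 1) / 2 = k * (k - 1) / 2 + k := by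
      rw [← Finset.sum_range_id, ← Finset.sum_range_id, Finset.sum_range_succ]
    rw [esymmEval_succ, hnode, esymmEval_smul, esymmEval_smul, ih k (by omega), htri]
    simp only [Fin.val_last]
    obtain ⟨m, rfl⟩ : ∃ m, n = k + m := ⟨n - k, by omega⟩
    rcases m with _ | m
    · rw [esymmEval_of_lt _ _ (by omega)]
      have h1 := hF k
      have h2 := hF (k + 1)
      have h3 : pqFact p q 0 = 1 := rfl
      simp [pqBinom, h1, h2, h3]
      ring
    · rw [ih (k + 1) (by omega), htri]
      have h1 := hF k
      have h2 := hF m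
      have h3 := (pqInt_pos p q hp hq k).ne'
      have h4 := (pqInt_pos p q hp hq m).ne'
      have h5 := pqInt_add p q (k + 1) (m + 1)
      unfold pqBinom
      rw [show k + (m + 1) - k = m + 1 by omega, show k + (m + 1) - (k + 1) = m by omega,
        show k + (m + 1) + 1 - (k + 1) = m + 1 by omega]
      have e1 : pqFact p q (k + (m + 1) + 1)
          = pqFact p q (k + (m + 1)) * pqInt p q (k + 1 + (m + 1)) := by
        rw [show k + 1 + (m + 1) = k + (m + 1) + 1 by omega]; rfl
      have e2 : ∀ j, pqFact p q (j + 1) = pqFact p q j * pqInt p q (j + 1) := fun _ => rfl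
      rw [e1, h5, e2 k, e2 m]
      generalize pqFact p q (k + (m + 1)) = A
      rw [show k + (m + 1) + 1 - 1 - (k + (m + 1)) = 0 by omega]
      generalize k * (k - 1) / 2 = t
      field_simp
      ring

/-- evaluation of elementary symmetric polynomials at (p,q)-geometric nodes:
`φ_{n,k}(p^{n-1}, p^{n-2}q, …, q^{n-1}) = (pq)^{k(k-1)/2} [n choose k]_{p,q}`. -/
theorem esymmEval_pq_nodes (n k : ℕ) (hn : 1 ≤ n) (hk1 : 1 ≤ k) (hk : k ≤ n)
    (p q : ℝ) (h0 : 0 < q) (hqp : q < p) :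
    esymmEval n k (fun i => p ^ (n - 1 - (i : ℕ)) * q ^ (i : ℕ)) =
      (p * q) ^ (k * (k - 1) / 2) * pqBinom p q n k := by
  exact pq_nodes_aux p q (h0.trans hqp) h0 n k hk
end

section
/- Restriction of the blossom of a Bernstein basis function: let n ≥ 2, let p, q be reals with 0 < q < p, and let 0 ≤ i ≤ n−1. Let b_i^n : ℝ^n → ℝ be the (p,q)-blossom of B_i^n(·;p,q) regarded as a polynomial of degree at most n, and let b_i^{n−1} : ℝ^{n−1} → ℝ be the (p,q)-blossom of B_i^{n−1}(·;p,q) regarded as a polynomial of degree at most n−1. Then for all reals u_1, …, u_{n−1}, b_i^n(u_1, …, u_{n−1}, 0) = b_i^{n−1}(u_1/p, …, u_{n−1}/p). -/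
/-- A function `f : ℝ^n → ℝ` is symmetric if it is invariant under all permutations
of its arguments. -/
def IsSymmetricFn (n : ℕ) (f : (Fin n → ℝ) → ℝ) : Prop :=
  ∀ (σ : Equiv.Perm (Fin n)) (u : Fin n → ℝ), f (fun i => u (σ i)) = f u

/-- A function `f : ℝ^n → ℝ` is multiaffine if, fixing all variables except the `j`-th,
the resulting one-variable function is affine (degree at most one). -/
def IsMultiaffine (n : ℕ) (f : (Fin n → ℝ) → ℝ) : Prop :=
  ∀ (j : Fin n) (u : Fin n → ℝ), ∃ a b : ℝ,
    ∀ x : ℝ, f (Function.update u j x) = a * x + b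

/-- The geometric diagonal. -/
noncomputable def pqDiag (p q : ℝ) (n : ℕ) (t : ℝ) : Fin n → ℝ :=
  fun j => p ^ (n - 1 - (j : ℕ)) * q ^ (j : ℕ) * t

lemma pqDiag_snoc (p q : ℝ) (hp : p ≠ 0) (n : ℕ) (t : ℝ) :
    pqDiag p q (n + 1) (t / p) = Fin.snoc (α := fun _ => ℝ) (pqDiag p q n t) (q ^ n * t / p) := by
  funext j
  refine Fin.lastCases ?_ (fun j => ?_) j
  · simp [pqDiag]; ring
  · simp only [pqDiag, Fin.snoc_castSucc, Fin.val_castSucc]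
    have h : n + 1 - 1 - (j : ℕ) = (n - 1 - j) + 1 := by omega
    rw [h, pow_succ]; field_simp

lemma pqDiag_cons (p q : ℝ) (hq : q ≠ 0) (n : ℕ) (t : ℝ) :
    pqDiag p q (n + 1) (t / q) = Fin.cons (α := fun _ => ℝ) (p ^ n * t / q) (pqDiag p q n t) := by
  funext j
  refine Fin.cases ?_ (fun j => ?_) j
  · simp [pqDiag]; ring
  · simp only [pqDiag, Fin.cons_succ, Fin.val_succ]
    have h : n + 1 - 1 - ((j : ℕ) + 1) = (n - 1 - j) := by omega
    rw [h, pow_succ]; field_simp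

lemma sym_cons {n : ℕ} {f : (Fin (n + 1) → ℝ) → ℝ} (hf : IsSymmetricFn (n + 1) f)
    (v : Fin n → ℝ) (a : ℝ) :
    f (Fin.cons (α := fun _ => ℝ) a v) = f (Fin.snoc (α := fun _ => ℝ) v a) := by
  rw [Fin.snoc_eq_cons_rotate]
  exact (hf (finRotate _) _).symm

lemma aff_snoc {n : ℕ} {f : (Fin (n + 1) → ℝ) → ℝ} (hf : IsMultiaffine (n + 1) f)
    (v : Fin n → ℝ) : ∃ a b : ℝ, ∀ x, f (Fin.snoc (α := fun _ => ℝ) v x) = a * x + b := by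
  obtain ⟨a, b, h⟩ := hf (Fin.last n) (Fin.snoc (α := fun _ => ℝ) v 0)
  refine ⟨a, b, fun x => ?_⟩
  rw [← h x, Fin.update_snoc_last]

lemma sym_restrict {n : ℕ} {f : (Fin (n + 1) → ℝ) → ℝ} (hf : IsSymmetricFn (n + 1) f) (x : ℝ) :
    IsSymmetricFn n (fun v => f (Fin.snoc (α := fun _ => ℝ) v x)) := by
  intro σ u
  have := hf (finSuccEquivLast.trans ((Equiv.optionCongr σ).trans finSuccEquivLast.symm))
    (Fin.snoc (α := fun _ => ℝ) u x)
  simp only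
  rw [← this]
  congr 1
  funext j
  refine Fin.lastCases ?_ (fun j => ?_) j <;> simp

lemma aff_restrict {n : ℕ} {f : (Fin (n + 1) → ℝ) → ℝ} (hf : IsMultiaffine (n + 1) f) (x : ℝ) :
    IsMultiaffine n (fun v => f (Fin.snoc (α := fun _ => ℝ) v x)) := by
  intro j u
  obtain ⟨a, b, h⟩ := hf j.castSucc (Fin.snoc (α := fun _ => ℝ) u x)
  refine ⟨a, b, fun y => ?_⟩
  rw [← h y]
  simp only [Fin.snoc_update]

lemma interp {n : ℕ} {f : (Fin (n + 1) → ℝ) → ℝ} (hs : IsSymmetricFn (n + 1) f)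
    (ha : IsMultiaffine (n + 1) f) (p q : ℝ) (hp : p ≠ 0) (hq : q ≠ 0) (t : ℝ) :
    ∃ a b : ℝ, (∀ x, f (Fin.snoc (α := fun _ => ℝ) (pqDiag p q n t) x) = a * x + b) ∧
      f (pqDiag p q (n + 1) (t / p)) = a * (q ^ n * t / p) + b ∧
      f (pqDiag p q (n + 1) (t / q)) = a * (p ^ n * t / q) + b := by
  obtain ⟨a, b, h⟩ := aff_snoc ha (pqDiag p q n t)
  refine ⟨a, b, h, ?_, ?_⟩
  · rw [pqDiag_snoc p q hp, h]
  · rw [pqDiag_cons p q hq, sym_cons hs, h]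

lemma blossom_unique (p q : ℝ) (h0 : 0 < q) (hqp : q < p) : ∀ (n : ℕ) (f : (Fin n → ℝ) → ℝ),
    IsSymmetricFn n f → IsMultiaffine n f → (∀ t : ℝ, t ≠ 0 → f (pqDiag p q n t) = 0) →
    ∀ u, f u = 0 := by
  have hp : 0 < p := h0.trans hqp
  intro n
  induction n with
  | zero =>
    intro f _ _ h u
    rw [← h 1 one_ne_zero]; congr 1; exact Subsingleton.elim _ _
  | succ n ih =>
    intro f hs ha h u
    rw [← Fin.snoc_init_self u]
    refine ih (fun v => f (Fin.snoc (α := fun _ => ℝ) v (u (Fin.last n))))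
      (sym_restrict hs _) (aff_restrict ha _) ?_ _
    intro t ht
    obtain ⟨a, b, h1, h2, h3⟩ := interp hs ha p q hp.ne' h0.ne' t
    rw [h _ (div_ne_zero ht hp.ne')] at h2
    rw [h _ (div_ne_zero ht h0.ne')] at h3
    have hlt : q ^ (n + 1) < p ^ (n + 1) := pow_lt_pow_left₀ hqp h0.le (by omega)
    have hz : a * (t * (p ^ (n + 1) - q ^ (n + 1))) = 0 := by
      have : a * (p ^ n * t / q) - a * (q ^ n * t / p) = 0 := by linarith
      field_simp at this
      rw [pow_succ, pow_succ]
      linear_combination this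
    have ha0 : a = 0 := by
      rcases mul_eq_zero.1 hz with h | h
      · exact h
      · exact absurd h (mul_ne_zero ht (sub_ne_zero.2 hlt.ne'))
    subst ha0
    simp only [h1]
    linarith

lemma pqInt_mul (p q : ℝ) (n : ℕ) : pqInt p q n * (p - q) = p ^ n - q ^ n := by
  have := Commute.geom_sum₂_mul (Commute.all q p) n
  have e : pqInt p q n = ∑ i ∈ Finset.range n, q ^ i * p ^ (n - 1 - i) := by
    unfold pqInt; exact Finset.sum_congr rfl fun _ _ => mul_comm _ _
  rw [e]; linear_combination -this

lemma pqFact_ne (p q : ℝ) (h0 : 0 < q) (hqp : q < p) (n : ℕ) : pqFact p q n ≠ 0 := by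
  induction n with
  | zero => simp [pqFact]
  | succ n ih =>
    refine mul_ne_zero ih ?_
    intro h
    have h1 := pqInt_mul p q (n + 1)
    have hlt : q ^ (n + 1) < p ^ (n + 1) := pow_lt_pow_left₀ hqp h0.le (by omega)
    rw [h] at h1; linarith

lemma bern_rec (p q : ℝ) (h0 : 0 < q) (hqp : q < p) (i d : ℕ) (t : ℝ) :
    p ^ (i + d + 1) * pqBernstein p q (i + d + 1) i (t / p)
      - q ^ (i + d + 1) * pqBernstein p q (i + d + 1) i (t / q)
    = (p ^ (i + d + 1) - q ^ (i + d + 1)) * pqBernstein p q (i + d) i (t / p) := by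
  have hp : 0 < p := h0.trans hqp
  have hpn := hp.ne'
  have hqn := h0.ne'
  unfold pqBernstein pqBinom
  have e1 : i + d + 1 - i = d + 1 := by omega
  have e2 : i + d - i = d := by omega
  have e3 : (i + d + 1) * (i + d + 1 - 1) / 2 = (i + d) * (i + d - 1) / 2 + (i + d) := by
    have := Finset.sum_range_id_mul_two (i + d)
    rw [← Finset.sum_range_id, ← Finset.sum_range_id, Finset.sum_range_succ]
  rw [e1, e2, e3]
  have hP : ∏ s ∈ Finset.range (d + 1), (p ^ s - q ^ s * (t / q))
      = p ^ d * (∏ s ∈ Finset.range d, (p ^ s - q ^ s * (t / p))) * (1 - t / q) := by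
    rw [Finset.prod_range_succ']
    congr 1
    · have : ∀ s ∈ Finset.range d, p ^ (s + 1) - q ^ (s + 1) * (t / q)
          = p * (p ^ s - q ^ s * (t / p)) := by
        intro s _; field_simp; ring
      rw [Finset.prod_congr rfl this, Finset.prod_mul_distrib]; simp
    · simp
  rw [hP, Finset.prod_range_succ]
  generalize ∏ s ∈ Finset.range d, (p ^ s - q ^ s * (t / p)) = P
  have F : ∀ n, pqFact p q (n + 1) = pqFact p q n * pqInt p q (n + 1) := fun _ => rfl
  have hI := pqInt_mul p q (i + d + 1)
  have hJ := pqInt_mul p q (d + 1)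
  have hd := pqFact_ne p q h0 hqp (d + 1)
  have hi := pqFact_ne p q h0 hqp i
  rw [F] at hd
  rw [F, F]
  have hd1 := left_ne_zero_of_mul hd
  have hd2 := right_ne_zero_of_mul hd
  rw [← hI]
  generalize (i + d) * (i + d - 1) / 2 = N
  generalize i * (i - 1) / 2 = M
  have key : p ^ (i + d + 1) * (t / p) ^ i * (p ^ d - q ^ d * (t / p))
      - q ^ (i + d + 1) * (t / q) ^ i * (p ^ d * (1 - t / q))
      = t ^ i * p ^ d * (pqInt p q (d + 1) * (p - q)) := by
    rw [hJ]
    simp only [div_pow, pow_add, pow_one]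
    field_simp
    ring
  generalize pqInt p q (d + 1) = J at *
  generalize pqInt p q (i + d + 1) = I at *
  generalize pqFact p q (i + d) = A at *
  generalize pqFact p q d = B at *
  generalize pqFact p q i = C at *
  calc _ = p ^ M / p ^ (N + (i + d)) * (A * I / (C * (B * J))) * P *
        (p ^ (i + d + 1) * (t / p) ^ i * (p ^ d - q ^ d * (t / p))
      - q ^ (i + d + 1) * (t / q) ^ i * (p ^ d * (1 - t / q))) := by ring
    _ = _ := by
      rw [key]
      simp only [div_pow, pow_add]
      field_simp

/-- restriction of the blossom of a Bernstein basis function.  Writing the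
degree as `n = m + 1` with `m ≥ 1` (so `n ≥ 2`) and `0 ≤ i ≤ n - 1 = m`: if `bn` is the
(p,q)-blossom of `B_i^{m+1}(·;p,q)` and `bm` is the (p,q)-blossom of `B_i^m(·;p,q)`, then
`bn(u_1, …, u_m, 0) = bm(u_1/p, …, u_m/p)`. -/
theorem pq_blossom_bernstein_restriction (m : ℕ) (hm : 1 ≤ m) (i : ℕ) (hi : i ≤ m)
    (p q : ℝ) (h0 : 0 < q) (hqp : q < p)
    (bn : (Fin (m + 1) → ℝ) → ℝ) (bm : (Fin m → ℝ) → ℝ)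
    (hbnsym : IsSymmetricFn (m + 1) bn) (hbnaff : IsMultiaffine (m + 1) bn)
    (hbndiag : ∀ t : ℝ, bn (fun j => p ^ (m - (j : ℕ)) * q ^ (j : ℕ) * t) =
      pqBernstein p q (m + 1) i t)
    (hbmsym : IsSymmetricFn m bm) (hbmaff : IsMultiaffine m bm)
    (hbmdiag : ∀ t : ℝ, bm (fun j => p ^ (m - 1 - (j : ℕ)) * q ^ (j : ℕ) * t) =
      pqBernstein p q m i t) :
    ∀ u : Fin m → ℝ, bn (Fin.snoc u 0) = bm (fun j => u j / p) := by
  intro u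
  have hp : 0 < p := h0.trans hqp
  have hm' : ∀ t, bm (pqDiag p q m t) = pqBernstein p q m i t := hbmdiag
  have hn' : ∀ t, bn (pqDiag p q (m + 1) t) = pqBernstein p q (m + 1) i t := hbndiag
  have := blossom_unique p q h0 hqp m
    (fun u => bn (Fin.snoc (α := fun _ => ℝ) u 0) - bm (fun j => u j / p)) ?_ ?_ ?_ u
  · exact sub_eq_zero.1 this
  · intro σ u
    have h1 := sym_restrict hbnsym 0 σ u
    have h2 := hbmsym σ (fun j => u j / p)
    simp only at h1 h2 ⊢
    rw [h1, h2]
  · intro j u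
    obtain ⟨a, b, h1⟩ := aff_restrict hbnaff 0 j u
    obtain ⟨c, d, h2⟩ := hbmaff j (fun j => u j / p)
    refine ⟨a - c / p, b - d, fun x => ?_⟩
    have e : (fun k => Function.update u j x k / p)
        = Function.update (fun j => u j / p) j (x / p) := by
      funext k
      by_cases hk : k = j
      · subst hk; simp
      · simp [hk]
    simp only at h1 ⊢
    rw [h1, e, h2]; ring
  · intro t ht
    have e : (fun j => pqDiag p q m t j / p) = pqDiag p q m (t / p) := by
      funext j; simp only [pqDiag]; ring
    obtain ⟨a, b, h1, h2, h3⟩ := interp hbnsym hbnaff p q hp.ne' h0.ne' t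
    rw [e, hm', h1]
    rw [hn'] at h2 h3
    obtain ⟨d, rfl⟩ := Nat.exists_eq_add_of_le hi
    have hr := bern_rec p q h0 hqp i d t
    rw [h2, h3] at hr
    have hlt : q ^ (i + d + 1) < p ^ (i + d + 1) := pow_lt_pow_left₀ hqp h0.le (by omega)
    have hne := (sub_pos.2 hlt).ne'
    have hx : p ^ (i + d + 1) * (a * (q ^ (i + d) * t / p) + b)
        - q ^ (i + d + 1) * (a * (p ^ (i + d) * t / q) + b)
        = (p ^ (i + d + 1) - q ^ (i + d + 1)) * b := by
      have hpn := hp.ne'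
      have hqn := h0.ne'
      rw [pow_succ, pow_succ]
      field_simp
      ring
    rw [hx] at hr
    have := mul_left_cancel₀ hne hr
    rw [← this]; ring
end
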